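/- Let G be a finite simple graph satisfying: (i) the cycles of G are pairwise vertex-disjoint; (ii) each cycle of G has length congruent to 1 modulo k; (iii) each connected component T of the graph Γ_G obtained by deleting all cycle vertices satisfies k | |V(T)| and T ∈ R^k_{|V(T)|/k}. Then α_k(G) = ((k−1)/k)·(n − ω(G)). -/

import Mathlib

open SimpleGraph

/-- A set `S` is a generalized `k`-independent set in `G` if the induced subgraph `G[S]`
contains no tree on `k` vertices, equivalently every connected component of `G[S]`
has at most `k - 1` vertices. -/
def IsGenKIndep {V : Type*} (G : SimpleGraph V) (k : ℕ) (S : Set V) : Prop :=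
  ∀ c : (G.induce S).ConnectedComponent, Nat.card c.supp ≤ k - 1

/-- The generalized `k`-independence number: the maximum size of a generalized
`k`-independent set. -/
noncomputable def alphaK {V : Type*} (G : SimpleGraph V) (k : ℕ) : ℕ :=
  sSup {m | ∃ S : Set V, IsGenKIndep G k S ∧ S.ncard = m}

/-- The dimension of the cycle space: `|E| - |V| + c(G)` (as a natural number;
note `|E| + c(G) ≥ |V|` always holds). -/
noncomputable def cycleDim {V : Type*} (G : SimpleGraph V) : ℕ :=
  Nat.card G.edgeSet + Nat.card G.ConnectedComponent - Nat.card V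

/-- `x` lies on a cycle of `G`. -/
def OnCycle {V : Type*} (G : SimpleGraph V) (x : V) : Prop :=
  ∃ (u : V) (w : G.Walk u u), w.IsCycle ∧ x ∈ w.support

/-- The cycles of `G` are pairwise vertex-disjoint: any two cycles sharing a vertex
have the same edge set, i.e. are the same cycle. -/
def CyclesPairwiseDisjoint {V : Type*} (G : SimpleGraph V) : Prop :=
  ∀ (u v : V) (w₁ : G.Walk u u) (w₂ : G.Walk v v), w₁.IsCycle → w₂.IsCycle →
    (∃ x, x ∈ w₁.support ∧ x ∈ w₂.support) → {e | e ∈ w₁.edges} = {e | e ∈ w₂.edges}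

/-- `InRk G k i S` says that the induced subgraph of `G` on `S` belongs to the
family `R_i^k`: it is obtained by attaching `i` `k`-vertex trees one by one,
each joined to the previous part by a single edge. -/
inductive InRk {V : Type*} (G : SimpleGraph V) (k : ℕ) : ℕ → Set V → Prop
  | base (S : Set V) (hcard : S.ncard = k) (htree : (G.induce S).IsTree) : InRk G k 1 S
  | step (i : ℕ) (S B : Set V) (hS : InRk G k i S) (hdisj : Disjoint S B)
      (hcard : B.ncard = k) (htree : (G.induce B).IsTree)
      (hone : ∃! p : V × V, p.1 ∈ S ∧ p.2 ∈ B ∧ G.Adj p.1 p.2) :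
      InRk G k (i + 1) (S ∪ B)

lemma indep_card {V W : Type*} [Finite V] {G : SimpleGraph V} {k : ℕ} {S : Set V}
    (hS : IsGenKIndep G k S) {H : SimpleGraph W} (hH : H.Preconnected) (f : H →g G)
    (hf : Function.Injective f) (hr : ∀ w, f w ∈ S) : Nat.card W ≤ k - 1 := by
  rcases isEmpty_or_nonempty W with hW | ⟨⟨w0⟩⟩
  · simp
  let g : H →g G.induce S := ⟨fun w => ⟨f w, hr w⟩, fun {a b} h => f.map_adj h⟩
  refine le_trans ?_ (hS ((G.induce S).connectedComponentMk (g w0)))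
  refine Nat.card_le_card_of_injective
    (fun w => (⟨g w, ?_⟩ : ((G.induce S).connectedComponentMk (g w0)).supp)) ?_
  · rw [ConnectedComponent.mem_supp_iff, ConnectedComponent.eq]
    exact (hH w w0).map g
  · intro a b hab
    apply hf
    have := congrArg (fun z => (z.1.1 : V)) hab
    exact this

/-- a connected set of size at least `k` has a vertex outside of `S` -/
lemma exists_notMem {V W : Type*} [Finite V] {G : SimpleGraph V} {k : ℕ} (hk : 2 ≤ k) {S : Set V}
    (hS : IsGenKIndep G k S) {H : SimpleGraph W} (hH : H.Preconnected) (f : H →g G)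
    (hf : Function.Injective f) (hc : k ≤ Nat.card W) : ∃ w, f w ∉ S := by
  by_contra! h
  have := indep_card hS hH f hf h
  omega

lemma reach_split {V : Type*} {G : SimpleGraph V} {u v a b : V} (h : G.Reachable a b) :
    (G.deleteEdges {s(u, v)}).Reachable a b ∨
      (((G.deleteEdges {s(u, v)}).Reachable a u ∨ (G.deleteEdges {s(u, v)}).Reachable a v) ∧
       ((G.deleteEdges {s(u, v)}).Reachable u b ∨ (G.deleteEdges {s(u, v)}).Reachable v b)) := by
  obtain ⟨p⟩ := h
  induction p with
  | nil => exact Or.inl (Reachable.refl _)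
  | @cons a c b h p ih =>
    by_cases he : s(a, c) = s(u, v)
    · right
      rcases Sym2.eq_iff.mp he with ⟨rfl, rfl⟩ | ⟨rfl, rfl⟩
      · refine ⟨Or.inl (Reachable.refl _), ?_⟩
        rcases ih with ih | ih
        · exact Or.inr ih
        · exact ih.2
      · refine ⟨Or.inr (Reachable.refl _), ?_⟩
        rcases ih with ih | ih
        · exact Or.inl ih
        · exact ih.2
    · have hac : (G.deleteEdges {s(u, v)}).Reachable a c := by
        apply Adj.reachable
        rw [deleteEdges_adj]
        exact ⟨h, by simpa using he⟩
      rcases ih with ih | ⟨ih1, ih2⟩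
      · exact Or.inl (hac.trans ih)
      · exact Or.inr ⟨ih1.imp hac.trans hac.trans, ih2⟩

lemma card_del {V : Type*} [Finite V] {G : SimpleGraph V} {e : Sym2 V} (he : e ∈ G.edgeSet) :
    Nat.card (G.deleteEdges {e}).edgeSet + 1 = Nat.card G.edgeSet := by
  rw [edgeSet_deleteEdges, Nat.card_coe_set_eq, Nat.card_coe_set_eq]
  exact Set.ncard_sdiff_singleton_add_one he

lemma comps_del_le {V : Type*} [Finite V] {G : SimpleGraph V} (u v : V) :
    Nat.card (G.deleteEdges {s(u, v)}).ConnectedComponent ≤ Nat.card G.ConnectedComponent + 1 := by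
  classical
  set H := G.deleteEdges {s(u, v)} with hH
  have hle : H ≤ G := deleteEdges_le _
  let f : H.ConnectedComponent → Option G.ConnectedComponent := fun c =>
    if c = H.connectedComponentMk u then none else some (c.map (Hom.ofLE hle))
  have hf : Function.Injective f := by
    intro c d
    refine ConnectedComponent.ind₂ (fun a b hab => ?_) c d
    simp only [f] at hab
    split_ifs at hab with h1 h2 h2
    · rw [h1, h2]
    · have h3 : G.Reachable a b := by
        simpa [ConnectedComponent.eq] using hab
      rw [ConnectedComponent.eq] at h1 h2 ⊢
      rcases reach_split (u := u) (v := v) h3 with h | ⟨h4, h5⟩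
      · exact h
      · rcases h4 with h4 | h4
        · exact absurd h4 h1
        rcases h5 with h5 | h5
        · exact absurd h5.symm h2
        exact h4.trans h5
  have := Nat.card_le_card_of_injective f hf
  rwa [Finite.card_option] at this

lemma comps_del_le_of_not_bridge {V : Type*} [Finite V] {G : SimpleGraph V} {u v : V}
    (h : ¬ G.IsBridge s(u, v)) :
    Nat.card (G.deleteEdges {s(u, v)}).ConnectedComponent ≤ Nat.card G.ConnectedComponent := by
  rw [isBridge_iff, not_not] at h
  have hle : G.deleteEdges {s(u, v)} ≤ G := deleteEdges_le _
  refine Nat.card_le_card_of_injective (fun c => c.map (Hom.ofLE hle)) ?_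
  intro c d
  refine ConnectedComponent.ind₂ (fun a b hab => ?_) c d
  have h3 : G.Reachable a b := by
    simpa [ConnectedComponent.eq] using hab
  rw [ConnectedComponent.eq]
  rcases reach_split (u := u) (v := v) h3 with h' | ⟨h4, h5⟩
  · exact h'
  · rcases h4 with h4 | h4 <;> rcases h5 with h5 | h5
    · exact h4.trans h5
    · exact h4.trans (h.trans h5)
    · exact h4.trans (h.symm.trans h5)
    · exact h4.trans h5

lemma comps_lt_of_bridge {V : Type*} [Finite V] {G : SimpleGraph V} {u v : V} (ha : G.Adj u v)
    (h : G.IsBridge s(u, v)) :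
    Nat.card G.ConnectedComponent < Nat.card (G.deleteEdges {s(u, v)}).ConnectedComponent := by
  have hle : G.deleteEdges {s(u, v)} ≤ G := deleteEdges_le _
  have hs := ConnectedComponent.surjective_map_ofLE hle
  refine lt_of_le_of_ne (Nat.card_le_card_of_surjective _ hs) ?_
  intro heq
  have hb := (Nat.bijective_iff_surjective_and_card _).mpr ⟨hs, heq.symm⟩
  rw [isBridge_iff] at h
  apply h
  rw [← ConnectedComponent.eq]
  apply hb.1
  simpa [ConnectedComponent.eq] using ha.reachable

lemma card_le_edges_add_comps {V : Type*} [Finite V] (m : ℕ) : ∀ G : SimpleGraph V,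
    Nat.card G.edgeSet = m → Nat.card V ≤ Nat.card G.edgeSet + Nat.card G.ConnectedComponent := by
  induction m with
  | zero =>
    intro G hG
    have hb : G = ⊥ := by
      rw [Nat.card_coe_set_eq, Set.ncard_eq_zero] at hG
      exact edgeSet_eq_empty.mp hG
    subst hb
    have : Nat.card V ≤ Nat.card (⊥ : SimpleGraph V).ConnectedComponent := by
      refine Nat.card_le_card_of_injective (fun v => connectedComponentMk _ v) ?_
      intro a b hab
      simpa [ConnectedComponent.eq] using hab
    omega
  | succ m ih =>
    intro G hG
    have hne : G.edgeSet.Nonempty := by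
      rw [Set.nonempty_iff_ne_empty]
      intro h
      simp [h] at hG
    obtain ⟨e, he⟩ := hne
    have h1 := card_del he
    have h2 := ih (G.deleteEdges {e}) (by omega)
    induction e with | _ u v => 
    have h3 := comps_del_le (G := G) u v
    omega

lemma acyclic_le {V : Type*} [Finite V] (m : ℕ) : ∀ G : SimpleGraph V, G.IsAcyclic →
    Nat.card G.edgeSet = m → Nat.card G.edgeSet + Nat.card G.ConnectedComponent ≤ Nat.card V := by
  induction m with
  | zero =>
    intro G _ hG
    rw [hG, zero_add]
    exact Nat.card_le_card_of_surjective (fun v => connectedComponentMk _ v) Quot.mk_surjective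
  | succ m ih =>
    intro G hac hG
    have hne : G.edgeSet.Nonempty := by
      rw [Set.nonempty_iff_ne_empty]
      intro h
      simp [h] at hG
    obtain ⟨e, he⟩ := hne
    have h1 := card_del he
    have h2 := ih (G.deleteEdges {e}) (hac.anti (deleteEdges_le _)) (by omega)
    induction e with | _ u v => 
    have h3 := comps_lt_of_bridge (G := G) (u := u) (v := v) he (isAcyclic_iff_forall_isBridge.mp hac he)
    omega

/-- small feedback vertex set -/
lemma feedback {V : Type*} [Finite V] (m : ℕ) : ∀ G : SimpleGraph V, Nat.card G.edgeSet = m →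
    ∃ (X : Set V) (F : SimpleGraph V), F.IsAcyclic ∧
      (∀ a b, a ∉ X → b ∉ X → G.Adj a b → F.Adj a b) ∧
      X.ncard + Nat.card V ≤ Nat.card G.edgeSet + Nat.card G.ConnectedComponent := by
  induction m with
  | zero =>
    intro G hG
    refine ⟨∅, G, ?_, fun _ _ _ _ h => h, ?_⟩
    · have hb : G = ⊥ := by
        rw [Nat.card_coe_set_eq, Set.ncard_eq_zero] at hG
        exact edgeSet_eq_empty.mp hG
      subst hb
      exact isAcyclic_bot
    · simpa using card_le_edges_add_comps _ G rfl
  | succ m ih =>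
    intro G hG
    by_cases hac : G.IsAcyclic
    · refine ⟨∅, G, hac, fun _ _ _ _ h => h, ?_⟩
      simpa using card_le_edges_add_comps _ G rfl
    rw [isAcyclic_iff_forall_adj_isBridge] at hac
    push Not at hac
    obtain ⟨u, v, huv, hb⟩ := hac
    have h1 := card_del (G := G) (e := s(u, v)) huv
    obtain ⟨X, F, hF, hX, hc⟩ := ih (G.deleteEdges {s(u, v)}) (by omega)
    refine ⟨insert u X, F, hF, ?_, ?_⟩
    · intro a b ha hb' hab
      rw [Set.mem_insert_iff, not_or] at ha hb'
      refine hX a b ha.2 hb'.2 ?_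
      rw [deleteEdges_adj]
      refine ⟨hab, ?_⟩
      simp only [Set.mem_singleton_iff, Sym2.eq_iff]
      rintro (⟨h, _⟩ | ⟨_, h⟩)
      · exact ha.1 h
      · exact hb'.1 h
    · have h3 := comps_del_le_of_not_bridge hb
      have h4 := Set.ncard_insert_le u X
      omega

lemma forest_indep {V : Type*} [Finite V] {G : SimpleGraph V} (hG : G.IsAcyclic) {k : ℕ}
    (hk : 2 ≤ k) (n : ℕ) : ∀ A : Set V, A.ncard = n →
      ∃ S ⊆ A, IsGenKIndep G k S ∧ (k - 1) * A.ncard ≤ k * S.ncard := by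
  classical
  induction n using Nat.strong_induction_on with
  | _ n ih =>
  intro A hA
  by_cases hlt : A.ncard < k
  · refine ⟨A, le_rfl, fun c => ?_, Nat.mul_le_mul_right _ (by omega)⟩
    have : Nat.card c.supp ≤ Nat.card A := Nat.card_le_card_of_injective _ Subtype.val_injective
    rw [Nat.card_coe_set_eq A] at this
    omega
  have hex : ∃ m, ∃ (B : Set V) (v : V), B ⊆ A ∧ v ∈ B ∧ k ≤ B.ncard ∧ B.ncard = m ∧
      ∀ x ∈ B, x ≠ v → ∀ y ∈ A, G.Adj x y → y ∈ B := by
    have : A.Nonempty := by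
      rw [Set.nonempty_iff_ne_empty]
      rintro rfl
      simp at hlt
      omega
    obtain ⟨v, hv⟩ := this
    exact ⟨_, A, v, le_rfl, hv, by omega, rfl, fun _ _ _ y hy _ => hy⟩
  obtain ⟨B, v, hBA, hvB, hkB, hBm, hcl⟩ := Nat.find_spec hex
  have hmin := fun m hm => Nat.find_min hex (m := m) hm
  rw [← hBm] at hmin
  clear hBm
  -- components of `B \ {v}` are small
  have hsmall : IsGenKIndep G k (B \ {v}) := by
    by_contra hnot
    unfold IsGenKIndep at hnot
    push Not at hnot
    obtain ⟨c, hc⟩ := hnot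
    set K : Set V := Subtype.val '' c.supp with hK
    have hKB : K ⊆ B \ {v} := by
      rintro _ ⟨x, _, rfl⟩
      exact x.2
    have hKcard : K.ncard = Nat.card c.supp := by
      rw [hK, Set.ncard_image_of_injective _ Subtype.val_injective, Nat.card_coe_set_eq]
    have hKcl : ∀ x ∈ K, ∀ y ∈ B \ {v}, G.Adj x y → y ∈ K := by
      rintro _ ⟨x, hx, rfl⟩ y hy hxy
      refine ⟨⟨y, hy⟩, ?_, rfl⟩
      rw [ConnectedComponent.mem_supp_iff] at hx ⊢
      rw [← hx, ConnectedComponent.eq]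
      exact (Adj.reachable (G := G.induce (B \ {v})) (u := x) (v := ⟨y, hy⟩) hxy).symm
    have huniq : ∀ a ∈ K, ∀ b ∈ K, G.Adj v a → G.Adj v b → a = b := by
      rintro _ ⟨a, ha, rfl⟩ _ ⟨b, hb, rfl⟩ hva hvb
      by_contra hab
      have hbr := isAcyclic_iff_forall_adj_isBridge.mp hG hva
      rw [isBridge_iff] at hbr
      apply hbr
      have h1 : (G.deleteEdges {s(v, a.1)}).Adj v b := by
        rw [deleteEdges_adj]
        refine ⟨hvb, ?_⟩
        simp only [Set.mem_singleton_iff, Sym2.eq_iff]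
        rintro (⟨_, h⟩ | ⟨h, _⟩)
        · exact hab h.symm
        · exact a.2.2 h.symm
      let g : G.induce (B \ {v}) →g G.deleteEdges {s(v, a.1)} :=
        ⟨Subtype.val, by
          intro x y hxy
          rw [deleteEdges_adj]
          refine ⟨hxy, ?_⟩
          simp only [Set.mem_singleton_iff, Sym2.eq_iff]
          rintro (⟨h, _⟩ | ⟨_, h⟩)
          · exact x.2.2 h
          · exact y.2.2 h⟩
      have h2 : (G.induce (B \ {v})).Reachable b a := by
        rw [ConnectedComponent.mem_supp_iff] at ha hb
        rw [← ConnectedComponent.eq, ha, hb]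
      exact h1.reachable.trans (h2.map g)
    have hKlt : K.ncard < B.ncard := by
      apply Set.ncard_lt_ncard
      · exact ⟨fun x hx => (hKB hx).1, fun h => (hKB (h hvB)).2 rfl⟩
      · exact B.toFinite
    apply hmin _ hKlt
    have hne : K.Nonempty := by
      obtain ⟨x, hx⟩ := c.nonempty_supp
      exact ⟨x, x, hx, rfl⟩
    obtain ⟨u, hu, hu'⟩ : ∃ u ∈ K, ∀ x ∈ K, G.Adj v x → x = u := by
      by_cases h : ∃ u ∈ K, G.Adj v u
      · obtain ⟨u, hu, hvu⟩ := h
        exact ⟨u, hu, fun x hx hvx => huniq x hx u hu hvx hvu⟩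
      · push Not at h
        obtain ⟨u, hu⟩ := hne
        exact ⟨u, hu, fun x hx hvx => absurd hvx (h x hx)⟩
    refine ⟨K, u, fun x hx => hBA (hKB hx).1, hu, by omega, rfl, ?_⟩
    intro x hx hxu y hy hxy
    have hyB : y ∈ B := hcl x (hKB hx).1 (hKB hx).2 y hy hxy
    refine hKcl x hx y ⟨hyB, ?_⟩ hxy
    rintro rfl
    exact hxu (hu' x hx hxy.symm)
  have hcardAB : (A \ B).ncard + B.ncard = A.ncard := Set.ncard_sdiff_add_ncard_of_subset hBA
  obtain ⟨S', hS'A, hS', hS'c⟩ := ih (A \ B).ncard (by omega) (A \ B) rfl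
  have hdisj : Disjoint (B \ {v}) S' := by
    rw [Set.disjoint_left]
    intro x hx hx'
    exact (hS'A hx').2 hx.1
  refine ⟨(B \ {v}) ∪ S', ?_, ?_, ?_⟩
  · rintro x (hx | hx)
    · exact hBA hx.1
    · exact (hS'A hx).1
  · have hstep : ∀ x y : ((B \ {v}) ∪ S' : Set V), (G.induce ((B \ {v}) ∪ S')).Reachable x y →
        x.1 ∈ B → y.1 ∈ B := by
      rintro x y ⟨p⟩ hx
      induction p with
      | nil => exact hx
      | @cons a b c h p ih' =>
        apply ih'
        have ha : a.1 ≠ v := by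
          rcases a.2 with h' | h'
          · exact h'.2
          · exact absurd hx (hS'A h').2
        refine hcl a hx ha b ?_ h
        rcases b.2 with h' | h'
        · exact hBA h'.1
        · exact (hS'A h').1
    intro c
    have hconn := c.connected_toSimpleGraph.preconnected
    let g : c.toSimpleGraph →g G := ⟨fun x => x.1.1, fun {a b} h => h⟩
    have hg : Function.Injective g := fun a b h => Subtype.ext (Subtype.ext h)
    have hreach : ∀ a b : c.supp, (G.induce ((B \ {v}) ∪ S')).Reachable a.1 b.1 := by
      intro a b
      have ha := a.2
      have hb := b.2
      rw [ConnectedComponent.mem_supp_iff] at ha hb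
      rw [← ConnectedComponent.eq, ha, hb]
    by_cases h : ∃ a : c.supp, a.1.1 ∈ B
    · obtain ⟨a, ha⟩ := h
      refine indep_card hsmall hconn g hg ?_
      intro w
      have hw := hstep a.1 w.1 (hreach a w) ha
      rcases w.1.2 with h' | h'
      · exact h'
      · exact absurd hw (hS'A h').2
    · push Not at h
      refine indep_card hS' hconn g hg ?_
      intro w
      rcases w.1.2 with h' | h'
      · exact absurd h'.1 (h w)
      · exact h'
  · rw [Set.ncard_union_eq hdisj]
    have h1 := Set.ncard_sdiff_singleton_add_one hvB
    obtain ⟨j, rfl⟩ : ∃ j, k = j + 1 := ⟨k - 1, by omega⟩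
    simp only [Nat.add_sub_cancel] at hS'c ⊢
    rw [← hcardAB, ← h1] 
    rw [← h1] at hkB
    nlinarith

lemma lower_bound {V : Type*} [Finite V] (G : SimpleGraph V) {k : ℕ} (hk : 2 ≤ k) :
    ∃ S : Set V, IsGenKIndep G k S ∧
      (k - 1) * (Nat.card V + Nat.card V) ≤
        k * S.ncard + (k - 1) * (Nat.card G.edgeSet + Nat.card G.ConnectedComponent) := by
  obtain ⟨X, F, hF, hX, hc⟩ := feedback _ G rfl
  obtain ⟨S, hSX, hS, hSc⟩ := forest_indep hF hk _ Xᶜ rfl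
  refine ⟨S, ?_, ?_⟩
  · intro c
    have hconn := c.connected_toSimpleGraph.preconnected
    let g : c.toSimpleGraph →g F :=
      ⟨fun x => x.1.1, fun {a b} h => hX _ _ (hSX a.1.2) (hSX b.1.2) h⟩
    have hg : Function.Injective g := fun a b h => Subtype.ext (Subtype.ext h)
    exact indep_card hS hconn g hg (fun w => w.1.2)
  · have h1 := Set.ncard_add_ncard_compl X
    have h2 := Nat.mul_le_mul_left (k - 1) hc
    rw [← h1] at h2 ⊢
    nlinarith

lemma block_bound {V W : Type*} [Finite V] [Finite W] {G : SimpleGraph V} {H : SimpleGraph W}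
    {k : ℕ} (hk : 2 ≤ k) {S : Set V} (hS : IsGenKIndep G k S) (f : H →g G)
    (hf : Function.Injective f) {B : Set W} (hB : (H.induce B).Preconnected) (hc : B.ncard = k) :
    (f ⁻¹' S ∩ B).ncard ≤ k - 1 := by
  obtain ⟨w, hw⟩ := exists_notMem hk hS hB (f.comp (Embedding.induce B).toHom)
    (hf.comp Subtype.val_injective) (by rw [Nat.card_coe_set_eq, hc])
  have : (f ⁻¹' S ∩ B).ncard < B.ncard := by
    apply Set.ncard_lt_ncard
    · exact ⟨Set.inter_subset_right, fun h => hw (h w.2).1⟩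
    · exact B.toFinite
  omega

lemma inRk_bound {V W : Type*} [Finite V] [Finite W] {G : SimpleGraph V} {H : SimpleGraph W}
    {k : ℕ} (hk : 2 ≤ k) {S : Set V} (hS : IsGenKIndep G k S) (f : H →g G)
    (hf : Function.Injective f) {i : ℕ} {T : Set W} (hT : InRk H k i T) :
    T.ncard = k * i ∧ (f ⁻¹' S ∩ T).ncard ≤ (k - 1) * i := by
  induction hT with
  | base T hcard htree =>
    simpa [hcard] using block_bound hk hS f hf htree.connected.preconnected hcard
  | step i T B hT hdisj hcard htree hone ih =>
    have h1 := block_bound hk hS f hf htree.connected.preconnected hcard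
    rw [Set.ncard_union_eq hdisj, Set.inter_union_distrib_left]
    have h2 := Set.ncard_union_le (f ⁻¹' S ∩ T) (f ⁻¹' S ∩ B)
    rw [ih.1, hcard, mul_add, mul_add]
    refine ⟨by ring, ?_⟩
    have := ih.2
    omega

lemma chain_bound {V : Type*} [Finite V] [DecidableEq V] {G : SimpleGraph V}
    {k : ℕ} (hk : 2 ≤ k) {S : Set V} [DecidablePred (· ∈ S)] (hS : IsGenKIndep G k S) (m : ℕ) :
    ∀ l : List V, l.Nodup → l.IsChain G.Adj → l.length = k * m →
      l.countP (· ∈ S) ≤ (k - 1) * m := by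
  induction m with
  | zero =>
    intro l _ _ hl
    have : l = [] := by simpa using hl
    simp [this]
  | succ m ih =>
    intro l hnd hch hl
    have hl' : l.length = k * m + k := by rw [hl]; ring
    have hsplit : l.countP (· ∈ S) = (l.take k).countP (· ∈ S) + (l.drop k).countP (· ∈ S) := by
      rw [← List.countP_append, List.take_append_drop]
    have h1 := ih (l.drop k) (hnd.sublist (List.drop_sublist _ _)) (hch.drop k)
      (by rw [List.length_drop]; omega)
    have hlen : (l.take k).length = k := by rw [List.length_take]; omega
    have h2 : (l.take k).countP (· ∈ S) ≤ k - 1 := by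
      have hne : l.take k ≠ [] := by
        intro h
        rw [h] at hlen
        simp at hlen
        omega
      let p := Walk.ofSupport (G := G) (l.take k) hne (hch.take k)
      have hp : p.support = l.take k := Walk.support_ofSupport hne (hch.take k)
      have hcard : Nat.card {v | v ∈ p.support} = k := by
        have h3 : {v | v ∈ p.support} = ((l.take k).toFinset : Set V) := by
          ext x
          simp [hp]
        rw [Nat.card_coe_set_eq, h3, Set.ncard_coe_finset, List.toFinset_card_of_nodup, hlen]
        exact hnd.sublist (List.take_sublist _ _)
      obtain ⟨w, hw⟩ := exists_notMem hk hS p.connected_induce_support.preconnected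
        (Embedding.induce _).toHom Subtype.val_injective hcard.ge
      have hw2 : w.1 ∈ l.take k := (congrArg (fun q : List V => w.1 ∈ q) hp).mp w.2
      have h4 := List.countP_le_length (p := fun x => decide (x ∈ S)) (l := l.take k)
      have h5 : (l.take k).countP (· ∈ S) ≠ (l.take k).length := by
        intro h
        rw [List.countP_eq_length] at h
        exact hw (by simpa using h w.1 hw2)
      omega
    rw [hsplit, mul_add]
    omega

lemma cycle_bound {V : Type*} [Finite V] [DecidableEq V] {G : SimpleGraph V}
    {k : ℕ} (hk : 2 ≤ k) {S : Set V} [DecidablePred (· ∈ S)] (hS : IsGenKIndep G k S)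
    {u : V} (w : G.Walk u u) (hw : w.IsCycle) (hlen : w.length % k = 1) :
    k * (w.support.toFinset.filter (· ∈ S)).card + (k - 1) ≤
      (k - 1) * w.support.toFinset.card := by
  have key : ∀ (v : V) (c : G.Walk v v), c.IsCycle →
      c.support.toFinset = c.support.tail.toFinset ∧ c.support.toFinset.card = c.length := by
    intro v c hc
    have h1 : c.support.toFinset = c.support.tail.toFinset := by
      ext x
      simp only [List.mem_toFinset]
      refine ⟨fun h => ?_, List.mem_of_mem_tail⟩
      rw [← Walk.cons_tail_support] at h
      rcases List.mem_cons.mp h with rfl | h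
      · exact Walk.end_mem_tail_support hc.not_nil
      · exact h
    refine ⟨h1, ?_⟩
    rw [h1, List.toFinset_card_of_nodup hc.support_nodup, List.length_tail, Walk.length_support]
    rfl
  have h3 := hw.three_le_length
  obtain ⟨m, hlm⟩ : ∃ m, w.length = k * m + 1 := by
    refine ⟨w.length / k, ?_⟩
    have := Nat.div_add_mod w.length k
    omega
  have hm1 : 1 ≤ m := by
    by_contra h
    have : m = 0 := by omega
    rw [this, mul_zero] at hlm
    omega
  have hkm : k ≤ k * m := Nat.le_mul_of_pos_right k hm1
  -- a vertex outside of `S`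
  have hex : ∃ v ∈ w.support, v ∉ S := by
    have hcard : k ≤ Nat.card {v | v ∈ w.support} := by
      have h5 : {v | v ∈ w.support} = (w.support.toFinset : Set V) := by
        ext x
        simp
      rw [Nat.card_coe_set_eq, h5, Set.ncard_coe_finset, (key _ w hw).2]
      omega
    obtain ⟨x, hx⟩ := exists_notMem hk hS w.connected_induce_support.preconnected
        (Embedding.induce _).toHom Subtype.val_injective hcard
    exact ⟨x.1, x.2, hx⟩
  obtain ⟨v, hv, hvS⟩ := hex
  have hc' : (w.rotate v hv).IsCycle := hw.rotate hv
  have hsupp : w.support.toFinset = (w.rotate v hv).support.toFinset := by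
    ext x
    simp [Walk.mem_support_rotate_iff]
  have hclen : (w.rotate v hv).length = w.length := by
    rw [← (key _ _ hc').2, ← hsupp, (key _ w hw).2]
  rw [(key _ w hw).2, hsupp, (key _ _ hc').1]
  generalize w.rotate v hv = c at *
  cases c with
  | nil => exact absurd hc' (by simp)
  | cons h p =>
    rename_i z
    have hnd : p.support.Nodup := by simpa using hc'.support_nodup
    have hL : p.support = p.support.dropLast ++ [v] := by
      conv_lhs => rw [← List.dropLast_append_getLast p.support_ne_nil]
      rw [Walk.getLast_support]
    have hpl : p.support.length = w.length := by
      rw [Walk.length_support, ← hclen, Walk.length_cons]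
    have hcnt : (p.support.toFinset.filter (· ∈ S)).card = p.support.countP (· ∈ S) := by
      rw [List.countP_eq_length_filter, ← List.toFinset_card_of_nodup (hnd.filter _)]
      congr 1
      ext x
      simp
    have hcb := chain_bound hk hS m p.support.dropLast
      (hnd.sublist (List.dropLast_sublist _)) (p.isChain_adj_support.dropLast)
      (by rw [List.length_dropLast]; omega)
    have hcnt2 : p.support.countP (· ∈ S) = p.support.dropLast.countP (· ∈ S) := by
      conv_lhs => rw [hL]
      rw [List.countP_append, List.countP_singleton]
      simp [hvS]
    rw [Walk.support_cons, List.tail_cons, hcnt, hcnt2, hlm]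
    calc _ ≤ k * ((k - 1) * m) + (k - 1) := by gcongr
      _ = _ := by ring

lemma ncard_fiber {α ι : Type*} [Finite α] [Fintype ι] (f : α → ι) (P : Set α) :
    P.ncard = ∑ i, (P ∩ f ⁻¹' {i}).ncard := by
  classical
  have := Fintype.ofFinite α
  rw [Set.ncard_eq_toFinset_card', Finset.card_eq_sum_card_fiberwise (f := f) (t := Finset.univ)
    (by simp)]
  refine Finset.sum_congr rfl fun i _ => ?_
  rw [Set.ncard_eq_toFinset_card']
  congr 1
  ext x
  simp

lemma upper_bound {V : Type*} [Fintype V] (G : SimpleGraph V) (k : ℕ)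
    (hk : 2 ≤ k)
    (h1 : CyclesPairwiseDisjoint G)
    (h2 : ∀ (u : V) (w : G.Walk u u), w.IsCycle → w.length % k = 1)
    (h3 : ∀ c : (G.induce {v : V | ¬ OnCycle G v}).ConnectedComponent,
      k ∣ Nat.card c.supp ∧
        InRk (G.induce {v : V | ¬ OnCycle G v}) k (Nat.card c.supp / k) c.supp)
    (S : Set V) (hS : IsGenKIndep G k S) :
    k * S.ncard + (k - 1) * (Nat.card G.edgeSet + Nat.card G.ConnectedComponent) ≤
      (k - 1) * (Nat.card V + Nat.card V) := by
  classical
  set Γ : Set V := {v : V | ¬ OnCycle G v} with hΓ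
  let 𝒞 : Finset (Finset V) := Finset.univ.filter
    (fun C => ∃ (u : V) (w : G.Walk u u), w.IsCycle ∧ C = w.support.toFinset)
  have hmem : ∀ C, C ∈ 𝒞 ↔ ∃ (u : V) (w : G.Walk u u), w.IsCycle ∧ C = w.support.toFinset := by
    intro C
    simp [𝒞]
  -- the number of cycles is at least the cycle space dimension
  have hcyc : Nat.card G.edgeSet + Nat.card G.ConnectedComponent ≤ Nat.card V + 𝒞.card := by
    have hch : ∀ C : 𝒞, ∃ e : Sym2 V, ∃ (u : V) (w : G.Walk u u), w.IsCycle ∧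
        C.1 = w.support.toFinset ∧ e ∈ w.edges := by
      intro C
      obtain ⟨u, w, hw, hC⟩ := (hmem C.1).mp C.2
      have hne : w.edges ≠ [] := by
        intro h
        have h4 := hw.three_le_length
        rw [← Walk.length_edges, h] at h4
        simp at h4
      obtain ⟨e, he⟩ := List.exists_mem_of_ne_nil _ hne
      exact ⟨e, u, w, hw, hC, he⟩
    choose e he using hch
    set F := G.deleteEdges (Set.range e) with hF
    have hFG : F ≤ G := deleteEdges_le _
    have hFac : F.IsAcyclic := by
      intro v c hc
      have hc' : (c.mapLe hFG).IsCycle := hc.mapLe hFG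
      have hCm : (c.mapLe hFG).support.toFinset ∈ 𝒞 := (hmem _).mpr ⟨_, _, hc', rfl⟩
      obtain ⟨u, w, hw, hC, hew⟩ := he ⟨_, hCm⟩
      have heq := h1 _ _ _ w hc' hw ⟨v, Walk.start_mem_support _, by
        rw [← List.mem_toFinset, ← hC]
        simp⟩
      have hem : e ⟨_, hCm⟩ ∈ (c.mapLe hFG).edges := by
        have : e ⟨_, hCm⟩ ∈ {e | e ∈ w.edges} := hew
        rw [← heq] at this
        exact this
      rw [Walk.edges_mapLe_eq_edges] at hem
      have hFE : F.edgeSet = G.edgeSet \ Set.range e := edgeSet_deleteEdges _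
      have := hFE.subset (c.edges_subset_edgeSet hem)
      exact this.2 ⟨_, rfl⟩
    have h4 := acyclic_le _ F hFac rfl
    have h5 := ConnectedComponent.card_le_card_of_le hFG
    have h6 : (Set.range e).ncard ≤ 𝒞.card := by
      rw [← Nat.card_coe_set_eq]
      refine (Finite.card_range_le e).trans ?_
      simp
    have h7 : Nat.card G.edgeSet ≤ Nat.card F.edgeSet + (Set.range e).ncard := by
      rw [hF, edgeSet_deleteEdges, Nat.card_coe_set_eq, Nat.card_coe_set_eq]
      exact Set.ncard_le_ncard_sdiff_add_ncard _ _
    omega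
  -- cycle part
  have hdisj : ∀ C ∈ 𝒞, ∀ D ∈ 𝒞, C ≠ D → Disjoint C D := by
    intro C hC D hD hne
    obtain ⟨u, w, hw, rfl⟩ := (hmem C).mp hC
    obtain ⟨v, w', hw', rfl⟩ := (hmem D).mp hD
    rw [Finset.disjoint_left]
    intro x hx hx'
    apply hne
    rw [List.mem_toFinset] at hx hx'
    have heq := h1 _ _ w w' hw hw' ⟨x, hx, hx'⟩
    have heq' : ∀ e, e ∈ w.edges ↔ e ∈ w'.edges := fun e => Set.ext_iff.mp heq e
    ext y
    rw [List.mem_toFinset, List.mem_toFinset,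
      Walk.mem_support_iff_exists_mem_edges_of_not_nil hw.not_nil,
      Walk.mem_support_iff_exists_mem_edges_of_not_nil hw'.not_nil]
    simp only [heq']
  have hbi : ((𝒞.biUnion id : Finset V) : Set V) = Γᶜ := by
    ext x
    simp only [Finset.coe_biUnion, Set.mem_iUnion, id, hΓ, Set.mem_compl_iff, Set.mem_ofPred_eq,
      not_not, OnCycle]
    constructor
    · rintro ⟨C, hC, hx⟩
      obtain ⟨u, w, hw, rfl⟩ := (hmem C).mp hC
      exact ⟨u, w, hw, by simpa using hx⟩
    · rintro ⟨u, w, hw, hx⟩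
      exact ⟨w.support.toFinset, (hmem _).mpr ⟨u, w, hw, rfl⟩, by simpa using hx⟩
  have hcard1 : (Γᶜ).ncard = ∑ C ∈ 𝒞, C.card := by
    rw [← hbi, Set.ncard_coe_finset, Finset.card_biUnion]
    · rfl
    · exact fun C hC D hD h => hdisj C hC D hD h
  have hcard2 : (S ∩ Γᶜ).ncard = ∑ C ∈ 𝒞, (C.filter (· ∈ S)).card := by
    have : S ∩ Γᶜ = ((𝒞.biUnion (fun C => C.filter (· ∈ S)) : Finset V) : Set V) := by
      rw [← hbi]
      ext x
      simp
      tauto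
    rw [this, Set.ncard_coe_finset, Finset.card_biUnion]
    intro C hC D hD h
    exact Finset.disjoint_filter_filter (hdisj C hC D hD h)
  have hcycsum : k * (S ∩ Γᶜ).ncard + (k - 1) * 𝒞.card ≤ (k - 1) * (Γᶜ).ncard := by
    rw [hcard1, hcard2, Finset.mul_sum, Finset.mul_sum, mul_comm (k - 1) 𝒞.card, ← smul_eq_mul,
      ← Finset.sum_const, ← Finset.sum_add_distrib]
    refine Finset.sum_le_sum fun C hC => ?_
    obtain ⟨u, w, hw, rfl⟩ := (hmem C).mp hC
    exact cycle_bound hk hS w hw (h2 u w hw)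
  -- forest part
  have hforest : k * (S ∩ Γ).ncard ≤ (k - 1) * Γ.ncard := by
    have := Fintype.ofFinite (G.induce Γ).ConnectedComponent
    have e1 : (S ∩ Γ).ncard = ((Subtype.val : Γ → V) ⁻¹' S).ncard := by
      rw [← Set.ncard_image_of_injective _ Subtype.val_injective, Subtype.image_preimage_coe,
        Set.inter_comm]
    have e2 : Γ.ncard = (Set.univ : Set Γ).ncard := by
      rw [Set.ncard_univ, Nat.card_coe_set_eq]
    rw [e1, e2, ncard_fiber (G.induce Γ).connectedComponentMk,
      ncard_fiber (G.induce Γ).connectedComponentMk Set.univ, Finset.mul_sum, Finset.mul_sum]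
    refine Finset.sum_le_sum fun c _ => ?_
    have hsupp : (G.induce Γ).connectedComponentMk ⁻¹' {c} = c.supp := by
      ext x
      simp [ConnectedComponent.mem_supp_iff]
    rw [hsupp, Set.univ_inter]
    obtain ⟨e3, e4⟩ := inRk_bound hk hS (Embedding.induce Γ).toHom Subtype.val_injective (h3 c).2
    rw [e3]
    calc _ ≤ k * ((k - 1) * (Nat.card c.supp / k)) := Nat.mul_le_mul_left _ e4
      _ = _ := by ring
  have t1 : (S ∩ Γ).ncard + (S ∩ Γᶜ).ncard = S.ncard := by
    rw [← Set.sdiff_eq]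
    exact Set.ncard_inter_add_ncard_sdiff_eq_ncard S Γ
  have t2 := Set.ncard_add_ncard_compl Γ
  have t3 := Nat.mul_le_mul_left (k - 1) hcyc
  rw [← t1]
  rw [← t2] at t3 ⊢
  nlinarith

/-- If the cycles of `G` are pairwise vertex-disjoint, every cycle has length
`≡ 1 (mod k)`, and every connected component `T` of `Γ_G` (the graph obtained by
deleting all cycle vertices) satisfies `k ∣ |V(T)|` and `T ∈ R^k_{|V(T)|/k}`, then
`α_k(G) = ((k-1)/k)·(n - ω(G))`. -/
theorem alphaK_eq_of_extremal {V : Type*} [Fintype V] (G : SimpleGraph V) (k : ℕ)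
    (hk : 2 ≤ k)
    (h1 : CyclesPairwiseDisjoint G)
    (h2 : ∀ (u : V) (w : G.Walk u u), w.IsCycle → w.length % k = 1)
    (h3 : ∀ c : (G.induce {v : V | ¬ OnCycle G v}).ConnectedComponent,
      k ∣ Nat.card c.supp ∧
        InRk (G.induce {v : V | ¬ OnCycle G v}) k (Nat.card c.supp / k) c.supp) :
    (alphaK G k : ℚ) = ((k : ℚ) - 1) / k * ((Nat.card V : ℚ) - cycleDim G) := by
  classical
  have hbdd : BddAbove {m | ∃ S : Set V, IsGenKIndep G k S ∧ S.ncard = m} := by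
    refine ⟨Nat.card V, ?_⟩
    rintro _ ⟨S, _, rfl⟩
    exact Set.ncard_le_card S
  have hne : {m | ∃ S : Set V, IsGenKIndep G k S ∧ S.ncard = m}.Nonempty := by
    obtain ⟨S, hS, _⟩ := lower_bound G hk
    exact ⟨_, S, hS, rfl⟩
  obtain ⟨S, hS, hSc⟩ := Nat.sSup_mem hne hbdd
  have hup := upper_bound G k hk h1 h2 h3 S hS
  obtain ⟨S', hS', hlow⟩ := lower_bound G hk
  have hle : S'.ncard ≤ alphaK G k := le_csSup hbdd ⟨S', hS', rfl⟩
  have hSc' : S.ncard = alphaK G k := hSc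
  rw [hSc'] at hup
  have hE := card_le_edges_add_comps _ G rfl
  have hw : cycleDim G + Nat.card V = Nat.card G.edgeSet + Nat.card G.ConnectedComponent := by
    unfold cycleDim
    omega
  rw [← hw] at hup hlow
  have heq : k * alphaK G k + (k - 1) * (cycleDim G + Nat.card V) =
      (k - 1) * (Nat.card V + Nat.card V) := by
    apply le_antisymm hup
    have := Nat.mul_le_mul_left k hle
    omega
  have hq : (k : ℚ) * alphaK G k + ((k : ℚ) - 1) * (cycleDim G + Nat.card V) =
      ((k : ℚ) - 1) * (Nat.card V + Nat.card V) := by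
    have := congrArg (Nat.cast : ℕ → ℚ) heq
    push_cast [Nat.cast_sub (show 1 ≤ k by omega)] at this
    exact this
  have hk0 : (k : ℚ) ≠ 0 := by
    have : k ≠ 0 := by omega
    exact_mod_cast this
  field_simp
  linarith
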